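/- For every positive integer n, the following identity holds in the formal power series ring ℚ[[x_1, …, x_n]]: ∑_{λ : λ' even} det((x_i^{λ_j + n − j})_{1≤i,j≤n}) · ∏_{1 ≤ i < j ≤ n} (1 − x_i x_j) = ∏_{1 ≤ i < j ≤ n} (x_i − x_j), where the sum is over all partitions λ = (λ_1 ≥ ⋯ ≥ λ_n ≥ 0) with at most n parts whose conjugate partition λ' has all parts even (the family is summable, since for each monomial only finitely many λ contribute). Equivalently (Littlewood): ∑_{λ' even} s_λ(x_1,…,x_n) = ∏_{i<j} 1/(1 − x_i x_j). -/

import Mathlib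

/-!
Schur's Pfaffian `∏ i < j, (x i - x j) / (1 - x i * x j)` equals the sum of the alternants
`det (x i ^ (l j + n - j))` over the partitions `l` with even columns. Both sides are alternating,
so it suffices to compare the coefficients at strictly decreasing exponents `ν`, where the right
side has coefficient `1` or `0` according to whether `ν` comes from such a partition. On the left, a
partial fraction expansion (equivalently, expanding the Pfaffian along a row) peels off variables:
for an even number of variables, only the term pairing the two variables with the largest exponents
contributes, and only if these exponents differ by `1`, that is, if the two largest parts are equal;
for an odd number, the smallest part has to be `0`.

Over `ℤ` the expansion takes place in the fraction field of the power series ring; any other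
coefficient ring is reached by base change from `ℤ`.
-/

open Finset

section Interpolation

open Polynomial

theorem eval_mul_eval_comm_of_common_roots {R : Type*} [CommRing R] [IsDomain R] {P Q : R[X]}
    {s : Finset R} (hP : P.natDegree ≤ #s) (hQ : Q.natDegree ≤ #s)
    (hPs : ∀ a ∈ s, P.eval a = 0) (hQs : ∀ a ∈ s, Q.eval a = 0) (x y : R) :
    P.eval x * Q.eval y = P.eval y * Q.eval x := by
  classical
  by_cases hy : y ∈ s
  · rw [hPs y hy, hQs y hy, mul_zero, zero_mul]
  · have hdeg : (C (Q.eval y) * P - C (P.eval y) * Q).natDegree ≤ #s :=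
      (natDegree_sub_le _ _).trans <| max_le ((natDegree_C_mul_le _ _).trans hP)
        ((natDegree_C_mul_le _ _).trans hQ)
    have hzero : C (Q.eval y) * P - C (P.eval y) * Q = 0 := by
      refine eq_zero_of_degree_lt_of_eval_finset_eq_zero (insert y s) ?_ ?_
      · rw [card_insert_of_notMem hy]
        exact degree_le_natDegree.trans_lt (by exact_mod_cast Nat.lt_succ_of_le hdeg)
      · intro a ha
        rcases mem_insert.1 ha with rfl | ha
        · simp [mul_comm]
        · simp [hPs a ha, hQs a ha]
    have := congrArg (eval x) hzero
    simp only [eval_sub, eval_mul, eval_C, eval_zero] at this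
    linear_combination this

theorem natDegree_prod_one_sub_C_mul_X_le {ι R : Type*} [CommRing R]
    (y : ι → R) (s : Finset ι) :
    (∏ b ∈ s, (1 - C (y b) * X)).natDegree ≤ #s := by
  refine (natDegree_prod_le _ _).trans ((sum_le_card_nsmul _ _ 1 fun b _ => ?_).trans (by simp))
  compute_degree

variable {ι K : Type*} [DecidableEq ι] [Field K] {y : ι → K} {s : Finset ι}

/-- The coefficient of `(t - y a) / (1 - t * y a)` in the partial fraction expansion of
`∏ b ∈ s, (t - y b) / (1 - t * y b)` for `s` of odd size. -/
def schurWeight (y : ι → K) (s : Finset ι) (a : ι) : K :=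
  ∏ b ∈ s.erase a, (1 - y a * y b) / (y a - y b)

/-- The difference of the two sides of the partial fraction expansion
`∑ a ∈ s, schurWeight y s a * (t - y a) / (1 - t * y a) = ∏ a ∈ s, (t - y a) / (1 - t * y a)`
with denominators cleared, as a polynomial in `t`. -/
noncomputable def schurDefect (y : ι → K) (s : Finset ι) : K[X] :=
  ∑ a ∈ s, C (schurWeight y s a) * ((X - C (y a)) * ∏ b ∈ s.erase a, (1 - C (y b) * X)) -
    ∏ a ∈ s, (X - C (y a))

theorem eval_schurDefect (x : K) :
    (schurDefect y s).eval x =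
      ∑ a ∈ s, schurWeight y s a * ((x - y a) * ∏ b ∈ s.erase a, (1 - y b * x)) -
        ∏ a ∈ s, (x - y a) := by
  simp [schurDefect, eval_finsetSum, eval_prod]

theorem natDegree_schurDefect_le : (schurDefect y s).natDegree ≤ #s := by
  refine (natDegree_sub_le _ _).trans (max_le (natDegree_sum_le_of_forall_le _ _ fun a ha => ?_) ?_)
  · refine (natDegree_C_mul_le _ _).trans <| natDegree_mul_le.trans ?_
    rw [natDegree_X_sub_C, ← card_erase_add_one ha, add_comm]
    gcongr
    exact natDegree_prod_one_sub_C_mul_X_le _ _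
  · rw [natDegree_finsetProd_X_sub_C_eq_card]

theorem eval_inv_schurDefect (hy : Set.InjOn y s) {a : ι} (ha : a ∈ s) (ha0 : y a ≠ 0) :
    (schurDefect y s).eval (y a)⁻¹ = 0 := by
  rw [eval_schurDefect, sum_eq_single_of_mem a ha, ← mul_prod_erase s _ ha, schurWeight,
    mul_left_comm, ← prod_mul_distrib, sub_eq_zero]
  · congr 1
    refine prod_congr rfl fun b hb => ?_
    obtain ⟨hba, hb⟩ := mem_erase.1 hb
    have : y a - y b ≠ 0 := sub_ne_zero.2 (hy.ne ha hb hba.symm)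
    field_simp
  · intro b _ hba
    rw [prod_eq_zero (mem_erase.2 ⟨hba.symm, ha⟩) (by rw [mul_inv_cancel₀ ha0, sub_self]),
      mul_zero, mul_zero]

theorem eval_one_schurDefect :
    (schurDefect y s).eval 1 = (∑ a ∈ s, schurWeight y s a - 1) * ∏ a ∈ s, (1 - y a) := by
  rw [eval_schurDefect, sub_mul, sum_mul, one_mul]
  congr 1
  refine sum_congr rfl fun a ha => ?_
  simp only [mul_one, mul_prod_erase s (fun b => 1 - y b) ha]

theorem eval_neg_one_schurDefect (hs : Odd #s) :
    (schurDefect y s).eval (-1) = (1 - ∑ a ∈ s, schurWeight y s a) * ∏ a ∈ s, (1 + y a) := by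
  have hprod : ∏ a ∈ s, (-1 - y a) = -∏ a ∈ s, (1 + y a) := by
    rw [prod_congr rfl fun a _ => (neg_add' 1 (y a)).symm, prod_neg, hs.neg_one_pow, neg_one_mul]
  rw [eval_schurDefect, hprod, sub_mul, sum_mul, one_mul, sub_neg_eq_add, add_comm, sub_eq_add_neg,
    ← sum_neg_distrib]
  congr 1
  refine sum_congr rfl fun a ha => ?_
  rw [← mul_prod_erase s (fun b => 1 + y b) ha]
  simp only [mul_neg, mul_one, sub_neg_eq_add]
  ring

theorem eval_schurDefect_mul_comm (hy : Set.InjOn y s) (hy0 : ∀ a ∈ s, y a ≠ 0) (x t : K) :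
    (schurDefect y s).eval x * ∏ a ∈ s, (1 - y a * t) =
      (schurDefect y s).eval t * ∏ a ∈ s, (1 - y a * x) := by
  classical
  have hcard : #(s.image fun a => (y a)⁻¹) = #s := card_image_of_injOn (inv_injective.comp_injOn hy)
  have h := eval_mul_eval_comm_of_common_roots (P := schurDefect y s)
    (Q := ∏ a ∈ s, (1 - C (y a) * X)) (s := s.image fun a => (y a)⁻¹)
    (hcard ▸ natDegree_schurDefect_le) (hcard ▸ natDegree_prod_one_sub_C_mul_X_le y s)
    (forall_mem_image.2 fun a ha => eval_inv_schurDefect hy ha (hy0 a ha))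
    (forall_mem_image.2 fun a ha => by
      rw [eval_prod, prod_eq_zero ha]
      simp [hy0 a ha]) x t
  simpa [eval_prod] using h

/-- The partial fraction expansion at `t = 1`. The defect is a constant multiple of
`∏ a ∈ s, (1 - t * y a)`, and comparing `t = 1` with `t = -1` shows that the constant vanishes when
`#s` is odd. -/
theorem sum_schurWeight_eq_one [NeZero (2 : K)] (hy : Set.InjOn y s) (hy0 : ∀ a ∈ s, y a ≠ 0)
    (hy1 : ∀ a ∈ s, y a * y a ≠ 1) (hs : Odd #s) : ∑ a ∈ s, schurWeight y s a = 1 := by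
  have h := eval_schurDefect_mul_comm hy hy0 1 (-1)
  simp only [eval_one_schurDefect, eval_neg_one_schurDefect hs, mul_neg, mul_one,
    sub_neg_eq_add] at h
  have hsub : ∏ a ∈ s, (1 - y a) ≠ 0 := prod_ne_zero_iff.2 fun a ha h =>
    hy1 a ha (by linear_combination (-1 - y a) * h)
  have hadd : ∏ a ∈ s, (1 + y a) ≠ 0 := prod_ne_zero_iff.2 fun a ha h =>
    hy1 a ha (by linear_combination (y a - 1) * h)
  refine mul_left_cancel₀ (mul_ne_zero two_ne_zero (mul_ne_zero hsub hadd)) ?_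
  linear_combination h

theorem sum_schurWeight_mul_div [NeZero (2 : K)] (hy : Set.InjOn y s) (hy0 : ∀ a ∈ s, y a ≠ 0)
    (hy1 : ∀ a ∈ s, y a * y a ≠ 1) (hs : Odd #s) {t : K} (ht : ∀ a ∈ s, 1 - t * y a ≠ 0) :
    ∑ a ∈ s, schurWeight y s a * ((t - y a) / (1 - t * y a)) =
      ∏ a ∈ s, (t - y a) / (1 - t * y a) := by
  have hdefect : (schurDefect y s).eval t = 0 := by
    have h := eval_schurDefect_mul_comm hy hy0 t 1
    rw [eval_one_schurDefect, sum_schurWeight_eq_one hy hy0 hy1 hs, sub_self, zero_mul,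
      zero_mul] at h
    refine (mul_eq_zero.1 h).resolve_right (prod_ne_zero_iff.2 fun a ha h => ?_)
    exact hy1 a ha (by linear_combination (-1 - y a) * h)
  rw [prod_div_distrib, eq_div_iff (prod_ne_zero_iff.2 ht), sum_mul,
    ← sub_eq_zero.1 ((eval_schurDefect t).symm.trans hdefect)]
  refine sum_congr rfl fun a ha => ?_
  have := ht a ha
  simp only [← mul_prod_erase s (fun b => 1 - t * y b) ha, mul_comm (y _) t]
  field_simp

end Interpolation

section PairProd

variable {ι M : Type*} [LinearOrder ι] [CommMonoid M]

/-- The product of `f i j` over all pairs `i < j` in `s`. -/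
def pairProd (f : ι → ι → M) (s : Finset ι) : M :=
  ∏ i ∈ s, ∏ j ∈ s with i < j, f i j

theorem pairProd_empty (f : ι → ι → M) : pairProd f ∅ = 1 :=
  rfl

theorem pairProd_univ [Fintype ι] [LocallyFiniteOrderTop ι] (f : ι → ι → M) :
    pairProd f univ = ∏ i, ∏ j ∈ Ioi i, f i j := by
  simp only [pairProd, filter_lt_eq_Ioi]

theorem map_pairProd {N F : Type*} [CommMonoid N] [FunLike F M N] [MonoidHomClass F M N]
    (φ : F) (f : ι → ι → M) (s : Finset ι) :
    φ (pairProd f s) = pairProd (fun i j => φ (f i j)) s := by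
  simp [pairProd]

variable {f : ι → ι → M} {s : Finset ι} {a : ι}

theorem pairProd_insert (ha : a ∉ s) :
    pairProd f (insert a s) =
      (∏ b ∈ s with b < a, f b a) * (∏ b ∈ s with a < b, f a b) * pairProd f s := by
  have hrow : ∀ i ∈ s, ∏ j ∈ insert a s with i < j, f i j =
      (if i < a then f i a else 1) * ∏ j ∈ s with i < j, f i j := by
    intro i _
    rw [filter_insert]
    split_ifs
    · rw [prod_insert (by simp [ha])]
    · rw [one_mul]
  rw [pairProd, prod_insert ha, filter_insert, if_neg (lt_irrefl a), prod_congr rfl hrow,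
    prod_mul_distrib, ← prod_filter, pairProd, mul_left_comm, mul_assoc]

theorem pairProd_insert_of_forall_lt (ha : ∀ b ∈ s, a < b) :
    pairProd f (insert a s) = (∏ b ∈ s, f a b) * pairProd f s := by
  rw [pairProd_insert fun h => (ha a h).false, filter_true_of_mem ha,
    filter_false_of_mem fun b hb => (ha b hb).not_gt, prod_empty, one_mul]

theorem pairProd_eq_neg_one_pow_mul_pairProd_erase {R : Type*} [CommRing R] {f : ι → ι → R}
    (hf : ∀ i j, f i j = -f j i) (ha : a ∈ s) :
    pairProd f s =
      (-1) ^ #{b ∈ s | b < a} * (∏ b ∈ s.erase a, f a b) * pairProd f (s.erase a) := by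
  have hbelow : ∏ b ∈ s.erase a with b < a, f b a =
      (-1) ^ #{b ∈ s.erase a | b < a} * ∏ b ∈ s.erase a with b < a, f a b := by
    rw [← prod_neg]
    exact prod_congr rfl fun b _ => hf b a
  have habove : {b ∈ s.erase a | ¬b < a} = {b ∈ s.erase a | a < b} :=
    filter_congr fun b hb => not_lt.trans (ne_of_mem_erase hb).symm.le_iff_lt
  have hcount : {b ∈ s.erase a | b < a} = {b ∈ s | b < a} := by
    rw [filter_erase, erase_eq_of_notMem (by simp)]
  conv_lhs => rw [← insert_erase ha]
  rw [pairProd_insert (notMem_erase a s), hbelow, hcount, mul_assoc ((-1) ^ _), ← hcount, ← habove,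
    prod_filter_mul_prod_filter_not]

end PairProd

section SchurPfaffian

variable {ι K : Type*} [LinearOrder ι] [Field K] {y : ι → K} {s : Finset ι}

theorem neg_one_pow_mul_pairProd_erase_eq_schurWeight_mul (hy : Function.Injective y)
    (hyy : ∀ i j, 1 - y i * y j ≠ 0) {a : ι} (ha : a ∈ s) :
    (-1) ^ #{b ∈ s | b < a} * pairProd (fun i j => (y i - y j) / (1 - y i * y j)) (s.erase a) =
      schurWeight y s a * pairProd (fun i j => (y i - y j) / (1 - y i * y j)) s := by
  have hweight :
      schurWeight y s a * ∏ b ∈ s.erase a, (y a - y b) / (1 - y a * y b) = 1 := by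
    rw [schurWeight, ← prod_mul_distrib]
    refine prod_eq_one fun b hb => ?_
    rw [div_mul_div_cancel₀ (sub_ne_zero.2 (hy.ne (ne_of_mem_erase hb).symm)), div_self (hyy a b)]
  rw [pairProd_eq_neg_one_pow_mul_pairProd_erase (s := s) (fun i j => by
    rw [mul_comm (y j), ← neg_div, neg_sub]) ha]
  linear_combination (-(-1) ^ #{b ∈ s | b < a} *
    pairProd (fun i j => (y i - y j) / (1 - y i * y j)) (s.erase a)) * hweight

variable [NeZero (2 : K)]

theorem pairProd_div_eq_sum_of_odd (hy : Function.Injective y) (hy0 : ∀ i, y i ≠ 0)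
    (hyy : ∀ i j, 1 - y i * y j ≠ 0) (hs : Odd #s) :
    pairProd (fun i j => (y i - y j) / (1 - y i * y j)) s =
      ∑ a ∈ s, (-1) ^ #{b ∈ s | b < a} *
        pairProd (fun i j => (y i - y j) / (1 - y i * y j)) (s.erase a) := by
  rw [sum_congr rfl fun a ha => neg_one_pow_mul_pairProd_erase_eq_schurWeight_mul hy hyy ha,
    ← sum_mul, sum_schurWeight_eq_one hy.injOn (fun a _ => hy0 a)
      (fun a _ => (sub_ne_zero.1 (hyy a a)).symm) hs, one_mul]

theorem pairProd_div_insert_eq_sum_of_odd (hy : Function.Injective y) (hy0 : ∀ i, y i ≠ 0)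
    (hyy : ∀ i j, 1 - y i * y j ≠ 0) (hs : Odd #s) {t : ι} (ht : ∀ a ∈ s, t < a) :
    pairProd (fun i j => (y i - y j) / (1 - y i * y j)) (insert t s) =
      ∑ a ∈ s, (-1) ^ #{b ∈ s | b < a} * ((y t - y a) / (1 - y t * y a) *
        pairProd (fun i j => (y i - y j) / (1 - y i * y j)) (s.erase a)) := by
  rw [sum_congr rfl fun a ha => (mul_left_comm _ _ _).trans <| congrArg _
      (neg_one_pow_mul_pairProd_erase_eq_schurWeight_mul hy hyy ha),
    pairProd_insert_of_forall_lt ht, ← sum_schurWeight_mul_div hy.injOn (fun a _ => hy0 a)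
      (fun a _ => (sub_ne_zero.1 (hyy a a)).symm) hs (fun a _ => hyy t a), sum_mul]
  exact sum_congr rfl fun a _ => by ring

end SchurPfaffian

section SchurEntry

open MvPowerSeries

variable {σ R : Type*} [CommRing R]

theorem isUnit_one_sub_X_mul_X (i j : σ) : IsUnit (1 - X i * X j : MvPowerSeries σ R) :=
  isUnit_iff_constantCoeff.2 (by simp)

/-- The entry `(x_i - x_j) / (1 - x_i x_j)` of Schur's Pfaffian, as a power series. -/
noncomputable def schurEntry (i j : σ) : MvPowerSeries σ R :=
  (X i - X j) * invOfUnit (1 - X i * X j) 1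

theorem one_sub_X_mul_X_mul_schurEntry (i j : σ) :
    (1 - X i * X j) * schurEntry i j = (X i - X j : MvPowerSeries σ R) := by
  rw [schurEntry, mul_left_comm, mul_invOfUnit _ _ (by simp), mul_one]

theorem schurEntry_antisymm (i j : σ) :
    (schurEntry i j : MvPowerSeries σ R) = -schurEntry j i := by
  rw [schurEntry, schurEntry, mul_comm (X j) (X i), ← neg_mul, neg_sub]

theorem map_schurEntry {τ S : Type*} [CommRing S] (φ : MvPowerSeries σ R →+* MvPowerSeries τ S)
    {i j : σ} {i' j' : τ} (hi : φ (X i) = X i') (hj : φ (X j) = X j') :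
    φ (schurEntry i j) = schurEntry i' j' := by
  refine (isUnit_one_sub_X_mul_X i' j').mul_left_cancel ?_
  have h := congrArg φ (one_sub_X_mul_X_mul_schurEntry i j)
  rw [one_sub_X_mul_X_mul_schurEntry]
  simpa only [map_mul, map_sub, map_one, hi, hj] using h

theorem map_schurEntry_eq_div {K : Type*} [Field K] (φ : MvPowerSeries σ R →+* K) (i j : σ) :
    φ (schurEntry i j) = (φ (X i) - φ (X j)) / (1 - φ (X i) * φ (X j)) := by
  have h := ((isUnit_one_sub_X_mul_X (R := R) i j).map φ).ne_zero
  rw [map_sub, map_one, map_mul] at h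
  rw [eq_div_iff h, mul_comm]
  simpa using congrArg φ (one_sub_X_mul_X_mul_schurEntry i j)

theorem pairProd_schurEntry_mul_prod_one_sub [LinearOrder σ] [Fintype σ]
    [LocallyFiniteOrderTop σ] :
    pairProd schurEntry univ * ∏ i, ∏ j ∈ Ioi i, (1 - X i * X j) =
      ∏ i : σ, ∏ j ∈ Ioi i, (X i - X j : MvPowerSeries σ R) := by
  simp only [pairProd_univ, ← prod_mul_distrib, mul_comm (schurEntry _ _),
    one_sub_X_mul_X_mul_schurEntry]

instance [NeZero (2 : R)] : NeZero (2 : FractionRing (MvPowerSeries σ R)) := ⟨fun h => by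
  have h2 : (2 : MvPowerSeries σ R) = 0 := FaithfulSMul.algebraMap_injective _
    (FractionRing (MvPowerSeries σ R)) (by rw [map_ofNat, map_zero, h])
  exact two_ne_zero (α := R) (by simpa only [map_ofNat, map_zero] using congrArg constantCoeff h2)⟩

section Nontrivial

variable [Nontrivial R]

theorem algebraMap_X_injective : Function.Injective fun i : σ =>
    algebraMap (MvPowerSeries σ R) (FractionRing (MvPowerSeries σ R)) (X i) := fun _ _ h =>
  X_inj.1 (FaithfulSMul.algebraMap_injective _ _ h)

theorem algebraMap_X_ne_zero (i : σ) :
    algebraMap (MvPowerSeries σ R) (FractionRing (MvPowerSeries σ R)) (X i) ≠ 0 := fun h => by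
  have hX := FaithfulSMul.algebraMap_injective _ _ (h.trans (map_zero _).symm)
  simpa using congrArg (coeff (Finsupp.single i 1)) hX

theorem one_sub_algebraMap_X_mul_algebraMap_X_ne_zero (i j : σ) :
    1 - algebraMap (MvPowerSeries σ R) (FractionRing (MvPowerSeries σ R)) (X i) *
      algebraMap (MvPowerSeries σ R) _ (X j) ≠ 0 := by
  simpa using ((isUnit_one_sub_X_mul_X (R := R) i j).map
    (algebraMap (MvPowerSeries σ R) (FractionRing (MvPowerSeries σ R)))).ne_zero

end Nontrivial

variable [IsDomain R] [LinearOrder σ] [NeZero (2 : R)] {s : Finset σ}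

theorem pairProd_schurEntry_eq_sum_of_odd (hs : Odd #s) :
    (pairProd schurEntry s : MvPowerSeries σ R) =
      ∑ a ∈ s, (-1) ^ #{b ∈ s | b < a} * pairProd schurEntry (s.erase a) := by
  apply FaithfulSMul.algebraMap_injective _ (FractionRing (MvPowerSeries σ R))
  simp only [map_sum, map_mul, map_pow, map_neg, map_one, map_pairProd, map_schurEntry_eq_div]
  exact pairProd_div_eq_sum_of_odd algebraMap_X_injective algebraMap_X_ne_zero
    one_sub_algebraMap_X_mul_algebraMap_X_ne_zero hs

theorem pairProd_schurEntry_insert_eq_sum_of_odd (hs : Odd #s) {t : σ} (ht : ∀ a ∈ s, t < a) :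
    (pairProd schurEntry (insert t s) : MvPowerSeries σ R) =
      ∑ a ∈ s, (-1) ^ #{b ∈ s | b < a} *
        (schurEntry t a * pairProd schurEntry (s.erase a)) := by
  apply FaithfulSMul.algebraMap_injective _ (FractionRing (MvPowerSeries σ R))
  simp only [map_sum, map_mul, map_pow, map_neg, map_one, map_pairProd, map_schurEntry_eq_div]
  exact pairProd_div_insert_eq_sum_of_odd algebraMap_X_injective algebraMap_X_ne_zero
    one_sub_algebraMap_X_mul_algebraMap_X_ne_zero hs ht

end SchurEntry

section IndependentOf

open MvPowerSeries Finsupp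

variable {σ R : Type*} [CommRing R]

/-- The power series in which the variable `X i` does not occur, encoded as the fixed points of the
substitution `X i ↦ 0`. -/
noncomputable def independentOf (R : Type*) [CommRing R] (i : σ) : Subring (MvPowerSeries σ R) :=
  (rescale (({i}ᶜ : Set σ).indicator 1)).eqLocus (RingHom.id _)

variable {i j k t : σ} {f : MvPowerSeries σ R} {ν : σ →₀ ℕ}

theorem coeff_eq_zero_of_mem_independentOf (hf : f ∈ independentOf R i) (hν : ν i ≠ 0) :
    coeff ν f = 0 := by
  have h : rescale (({i}ᶜ : Set σ).indicator 1) f = f := hf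
  rw [← h, coeff_rescale, Finsupp.prod, prod_eq_zero (Finsupp.mem_support_iff.2 hν) (by simp [hν]),
    zero_mul]

theorem X_mem_independentOf (h : j ≠ i) : X j ∈ independentOf R i := by
  classical
  refine MvPowerSeries.ext fun ν => ?_
  rw [RingHom.id_apply, coeff_rescale, coeff_X]
  split_ifs with hν
  · simp [hν, h]
  · rw [mul_zero]

theorem schurEntry_mem_independentOf (hj : j ≠ i) (hk : k ≠ i) :
    schurEntry j k ∈ independentOf R i :=
  map_schurEntry _ (X_mem_independentOf hj) (X_mem_independentOf hk)

theorem pairProd_schurEntry_mem_independentOf [LinearOrder σ] {s : Finset σ} (hi : i ∉ s) :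
    pairProd schurEntry s ∈ independentOf R i :=
  prod_mem fun _ ha => prod_mem fun _ hb => schurEntry_mem_independentOf
    (ne_of_mem_of_not_mem ha hi) (ne_of_mem_of_not_mem (mem_filter.1 hb).1 hi)

theorem coeff_add_single_X_mul : coeff (ν + single i 1) (X i * f) = coeff ν f := by
  rw [add_comm, X, coeff_add_monomial_mul, one_mul]

theorem coeff_X_mul_of_apply_eq_zero (hν : ν i = 0) : coeff ν (X i * f) = 0 := by
  rw [X, coeff_monomial_mul, if_neg fun h => by simpa [hν] using h i]

theorem coeff_add_single_schurEntry_mul (hit : i ≠ t) (hfi : f ∈ independentOf R i)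
    (hft : f ∈ independentOf R t) {μ : σ →₀ ℕ} (hμi : μ i = 0) (hμt : μ t = 0) (a b : ℕ) :
    coeff (μ + single i (a + b + 1) + single t b) (schurEntry i t * f) =
      if a = 0 then coeff μ f else 0 := by
  have h : schurEntry i t * f = X i * (X t * (schurEntry i t * f)) + X i * f - X t * f := by
    linear_combination f * one_sub_X_mul_X_mul_schurEntry (R := R) i t
  induction b with
  | zero =>
    have hXt (g : MvPowerSeries σ R) : coeff (μ + single i (a + 1)) (X t * g) = 0 :=
      coeff_X_mul_of_apply_eq_zero (by simp [hit.symm, hμt])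
    rw [h, mul_left_comm (X i), single_zero, add_zero, map_sub, map_add, add_zero, hXt, hXt,
      zero_add, sub_zero, single_add, ← add_assoc, coeff_add_single_X_mul]
    split_ifs with ha
    · simp [ha]
    · exact coeff_eq_zero_of_mem_independentOf hfi (by simp [hμi, ha])
  | succ b ih =>
    have hexp : μ + single i (a + (b + 1) + 1) + single t (b + 1) =
        μ + single i (a + b + 1) + single t b + single t 1 + single i 1 := by
      simp only [← add_assoc a, single_add]
      abel
    have hXi : coeff (μ + single i (a + b + 1) + single t b + single t 1 + single i 1)
        (X i * f) = 0 := by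
      rw [coeff_add_single_X_mul, coeff_eq_zero_of_mem_independentOf hft (by simp)]
    have hXt : coeff (μ + single i (a + b + 1) + single t b + single t 1 + single i 1)
        (X t * f) = 0 := by
      rw [add_right_comm, coeff_add_single_X_mul, coeff_eq_zero_of_mem_independentOf hfi (by simp)]
    rw [h, hexp, map_sub, map_add, hXi, hXt, coeff_add_single_X_mul, coeff_add_single_X_mul, ih,
      add_zero, sub_zero]

theorem coeff_schurEntry_mul (hit : i ≠ t) (hfi : f ∈ independentOf R i)
    (hft : f ∈ independentOf R t) (h : ν t < ν i) :
    coeff ν (schurEntry i t * f) = if ν i = ν t + 1 then coeff ((ν.erase i).erase t) f else 0 := by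
  obtain ⟨a, ha⟩ := Nat.exists_eq_add_of_lt h
  have hν : (ν.erase i).erase t + single i (a + ν t + 1) + single t (ν t) = ν := by
    rw [add_comm a, ← ha, add_right_comm, ← erase_ne hit.symm (f := ν), erase_add_single,
      erase_add_single]
  have hcoeff := coeff_add_single_schurEntry_mul hit hfi hft (μ := (ν.erase i).erase t)
    (by simp [hit]) (by simp) a (ν t)
  rw [hν] at hcoeff
  exact hcoeff.trans (if_congr (by omega) rfl rfl)

end IndependentOf

section EvenColumns

variable {σ : Type*} [LinearOrder σ] {ν ν' : σ → ℕ} {s u : Finset σ} {i t : σ} {c m : ℕ}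

/-- The height of the `c`-th column (counted from `1`) of the partition with parts
`ν i - #{j ∈ s | i < j}`, for `i ∈ s`. -/
def columnHeight (ν : σ → ℕ) (s : Finset σ) (c : ℕ) : ℕ :=
  #{i ∈ s | c + #{j ∈ s | i < j} ≤ ν i}

/-- All columns of the partition with parts `ν i - #{j ∈ s | i < j}`, for `i ∈ s`, have even
height. -/
def HasEvenColumns (ν : σ → ℕ) (s : Finset σ) : Prop :=
  ∀ c, 1 ≤ c → Even (columnHeight ν s c)

theorem columnHeight_congr (h : ∀ i ∈ s, ν i = ν' i) :
    columnHeight ν s c = columnHeight ν' s c :=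
  congrArg card <| filter_congr fun i hi => by rw [h i hi]

theorem hasEvenColumns_congr (h : ∀ i ∈ s, ν i = ν' i) :
    HasEvenColumns ν s ↔ HasEvenColumns ν' s :=
  forall₂_congr fun c _ => by rw [columnHeight_congr h]

theorem columnHeight_insert_of_forall_lt (ht : ∀ j ∈ s, t < j) :
    columnHeight ν (insert t s) c = columnHeight ν s c + if c + #s ≤ ν t then 1 else 0 := by
  have hts : t ∉ s := fun h => (ht t h).false
  have htop : {j ∈ insert t s | t < j} = s := by
    rw [filter_insert, if_neg (lt_irrefl t), filter_true_of_mem ht]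
  have hrest : ∀ i ∈ s, {j ∈ insert t s | i < j} = {j ∈ s | i < j} := fun i hi => by
    rw [filter_insert, if_neg (ht i hi).not_gt]
  rw [columnHeight, filter_insert, htop, filter_congr fun i hi => by rw [hrest i hi]]
  split_ifs
  · rw [card_insert_of_notMem (by simp [hts]), columnHeight]
  · rw [columnHeight, add_zero]

theorem columnHeight_insert_of_forall_gt (ht : ∀ j ∈ s, j < t) :
    columnHeight ν (insert t s) c = columnHeight ν s (c + 1) + if c ≤ ν t then 1 else 0 := by
  have hts : t ∉ s := fun h => (ht t h).false
  have hbot : {j ∈ insert t s | t < j} = ∅ := by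
    rw [filter_insert, if_neg (lt_irrefl t), filter_false_of_mem fun j hj => (ht j hj).not_gt]
  have hrest : ∀ i ∈ s, c + #{j ∈ insert t s | i < j} = c + 1 + #{j ∈ s | i < j} := fun i hi => by
    rw [filter_insert, if_pos (ht i hi), card_insert_of_notMem (by simp [hts]), add_assoc,
      add_comm 1]
  rw [columnHeight, filter_insert, hbot, card_empty, add_zero,
    filter_congr fun i hi => by rw [hrest i hi]]
  split_ifs
  · rw [card_insert_of_notMem (by simp [hts]), columnHeight]
  · rw [columnHeight, add_zero]

theorem add_card_le_of_strictAntiOn (hν : StrictAntiOn ν s) (hi : i ∈ s) (hu : u ⊆ s)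
    (hiu : ∀ k ∈ u, i < k) (hm : m ≤ ν i) (hmu : ∀ k ∈ u, m ≤ ν k) : m + #u ≤ ν i := by
  have hmaps : Set.MapsTo ν u (Ico m (ν i)) := fun k hk =>
    mem_coe.2 <| mem_Ico.2 ⟨hmu k hk, hν hi (hu hk) (hiu k hk)⟩
  have hcard := card_le_card_of_injOn ν hmaps (hν.injOn.mono hu)
  rw [Nat.card_Ico] at hcard
  omega

theorem columnHeight_eq_card (hν : StrictAntiOn ν s) (hc : ∀ i ∈ s, c ≤ ν i) :
    columnHeight ν s c = #s :=
  congrArg card <| filter_true_of_mem fun i hi =>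
    add_card_le_of_strictAntiOn hν hi (filter_subset _ _) (fun _ hk => (mem_filter.1 hk).2)
      (hc i hi) fun k hk => hc k (mem_filter.1 hk).1

theorem columnHeight_eq_zero (ht : ∀ j ∈ s, t < j) (hν : StrictAntiOn ν (insert t s : Finset σ))
    (hc : ν t < c + #s) : columnHeight ν s c = 0 := by
  refine card_eq_zero.2 <| filter_false_of_mem fun i hi hci => hc.not_ge ?_
  have hbelow : ν i + #{k ∈ s | ¬i < k} ≤ ν t := by
    refine add_card_le_of_strictAntiOn hν (mem_insert_self t s)
      ((filter_subset _ _).trans (subset_insert t s)) (fun k hk => ht k (mem_filter.1 hk).1)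
      (hν (mem_insert_self t s) (mem_insert_of_mem hi) (ht i hi)).le fun k hk => ?_
    obtain ⟨hk, hki⟩ := mem_filter.1 hk
    exact hν.antitoneOn (mem_insert_of_mem hk) (mem_insert_of_mem hi) (not_lt.1 hki)
  have hsplit := card_filter_add_card_filter_not (s := s) (i < ·)
  omega

theorem hasEvenColumns_insert_insert_iff {a : σ} (hta : t < a) (ha : ∀ j ∈ s, a < j)
    (hν : StrictAntiOn ν (insert t (insert a s) : Finset σ)) :
    HasEvenColumns ν (insert t (insert a s)) ↔ ν t = ν a + 1 ∧ HasEvenColumns ν s := by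
  have hheight (c : ℕ) : columnHeight ν (insert t (insert a s)) c =
      columnHeight ν s c + (if c + #s ≤ ν a then 1 else 0) +
        if c + #s + 1 ≤ ν t then 1 else 0 := by
    rw [columnHeight_insert_of_forall_lt (forall_mem_insert _ _ _ |>.2
      ⟨hta, fun j hj => hta.trans (ha j hj)⟩), columnHeight_insert_of_forall_lt ha,
      card_insert_of_notMem fun h => (ha a h).false, add_assoc c]
  have hνa : StrictAntiOn ν (insert a s : Finset σ) :=
    hν.mono (coe_subset.2 (subset_insert t _))
  have hlt : ν a < ν t := hν (by simp) (by simp) hta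
  have heven (h : ν t = ν a + 1) (c : ℕ) :
      Even (columnHeight ν (insert t (insert a s)) c) ↔ Even (columnHeight ν s c) := by
    rw [hheight, h, add_assoc]
    simp only [add_le_add_iff_right]
    split_ifs <;> simp [Nat.even_add]
  refine ⟨fun h => ?_, fun ⟨h, hs⟩ c hc => (heven h c).2 (hs c hc)⟩
  have hta' : ν t = ν a + 1 := by
    by_contra hne
    have hsa : #s ≤ ν a := by
      simpa using add_card_le_of_strictAntiOn (m := 0) hνa (mem_insert_self a s)
        (subset_insert a s) ha (Nat.zero_le _) fun _ _ => Nat.zero_le _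
    have hlast := h (ν t - #s - 1) (by omega)
    rw [hheight, columnHeight_eq_zero ha hνa (by omega), if_neg (by omega),
      if_pos (by omega)] at hlast
    simp at hlast
  exact ⟨hta', fun c hc => (heven hta' c).1 (h c hc)⟩

theorem hasEvenColumns_insert_iff_of_even (ht : ∀ j ∈ s, j < t) (hs : Even #s)
    (hν : StrictAntiOn ν (insert t s : Finset σ)) :
    HasEvenColumns ν (insert t s) ↔ ν t = 0 ∧ HasEvenColumns ν s := by
  have hcard : #(insert t s) = #s + 1 := card_insert_of_notMem fun h => (ht t h).false
  have hstep (h0 : ν t = 0) {c : ℕ} (hc : 1 ≤ c) :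
      columnHeight ν (insert t s) c = columnHeight ν s (c + 1) := by
    rw [columnHeight_insert_of_forall_gt ht, if_neg (by omega), add_zero]
  refine ⟨fun h => ?_, fun ⟨h0, h⟩ c hc => hstep h0 hc ▸ h (c + 1) (by omega)⟩
  have h0 : ν t = 0 := by
    by_contra hne
    have hfull := columnHeight_eq_card hν (c := 1) <| forall_mem_insert _ _ _ |>.2
      ⟨by omega, fun i hi => by
        have := hν (mem_insert_of_mem hi) (mem_insert_self t s) (ht i hi)
        omega⟩
    exact Nat.not_even_iff_odd.2 hs.add_one (hcard ▸ hfull ▸ h 1 le_rfl)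
  refine ⟨h0, fun c hc => ?_⟩
  obtain rfl | hc := hc.eq_or_lt
  · have hfull := columnHeight_eq_card hν (c := 0) fun _ _ => Nat.zero_le _
    rw [columnHeight_insert_of_forall_gt ht, if_pos (Nat.zero_le _), hcard] at hfull
    exact Nat.add_right_cancel hfull ▸ hs
  · obtain ⟨c, rfl⟩ := Nat.exists_eq_add_of_lt hc
    exact hstep h0 (c := 1 + c) (by omega) ▸ h (1 + c) (by omega)

end EvenColumns

section Coefficients

open MvPowerSeries

variable {σ R : Type*} [CommRing R]

theorem coeff_neg_one_pow_mul (ν : σ →₀ ℕ) (k : ℕ) (f : MvPowerSeries σ R) :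
    coeff ν ((-1) ^ k * f) = (-1) ^ k * coeff ν f := by
  have : ((-1) ^ k : MvPowerSeries σ R) = C ((-1) ^ k) := by simp
  rw [this, coeff_C_mul]

variable [LinearOrder σ]

theorem exists_eq_insert_forall_lt {s : Finset σ} (hs : s.Nonempty) :
    ∃ t u, (∀ j ∈ u, t < j) ∧ s = insert t u :=
  ⟨s.min' hs, s.erase (s.min' hs), fun _ => s.min'_lt_of_mem_erase_min' hs,
    (insert_erase (s.min'_mem hs)).symm⟩

theorem exists_eq_insert_forall_gt {s : Finset σ} (hs : s.Nonempty) :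
    ∃ t u, (∀ j ∈ u, j < t) ∧ s = insert t u :=
  ⟨s.max' hs, s.erase (s.max' hs), fun _ => s.lt_max'_of_mem_erase_max' hs,
    (insert_erase (s.max'_mem hs)).symm⟩

variable [IsDomain R] [NeZero (2 : R)] {s : Finset σ} {ν : σ →₀ ℕ}

theorem coeff_pairProd_schurEntry_insert_insert {t a : σ} (hta : t < a) (ha : ∀ j ∈ s, a < j)
    (hs : Even #s) (hν : StrictAntiOn ν (insert t (insert a s) : Finset σ)) :
    coeff ν (pairProd schurEntry (insert t (insert a s)) : MvPowerSeries σ R) =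
      if ν t = ν a + 1 then coeff ((ν.erase t).erase a) (pairProd schurEntry s) else 0 := by
  have has : a ∉ s := fun h => (ha a h).false
  have ht : ∀ b ∈ insert a s, t < b :=
    forall_mem_insert _ _ _ |>.2 ⟨hta, fun j hj => hta.trans (ha j hj)⟩
  have hterm : ∀ b ∈ insert a s, coeff ν (schurEntry t b *
      pairProd schurEntry ((insert a s).erase b) : MvPowerSeries σ R) =
        if ν t = ν b + 1 then
          coeff ((ν.erase t).erase b) (pairProd schurEntry ((insert a s).erase b)) else 0 :=
    fun b hb => coeff_schurEntry_mul (ht b hb).ne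
      (pairProd_schurEntry_mem_independentOf fun h => (ht t (mem_of_mem_erase h)).false)
      (pairProd_schurEntry_mem_independentOf (notMem_erase b _))
      (hν (mem_insert_self t _) (mem_insert_of_mem hb) (ht b hb))
  rw [pairProd_schurEntry_insert_eq_sum_of_odd (card_insert_of_notMem has ▸ hs.add_one) ht,
    map_sum, sum_eq_single_of_mem a (mem_insert_self a s)]
  · rw [coeff_neg_one_pow_mul, hterm a (mem_insert_self a s), erase_insert has,
      filter_insert, if_neg (lt_irrefl a), filter_false_of_mem fun j hj => (ha j hj).not_gt,
      card_empty, pow_zero, one_mul]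
  · intro b hb hba
    have hνb : ν b < ν a := hν (by simp) (mem_insert_of_mem hb)
      (ha b ((mem_insert.1 hb).resolve_left hba))
    have hνa : ν a < ν t := hν (by simp) (by simp) hta
    rw [coeff_neg_one_pow_mul, hterm b hb, if_neg (by omega), mul_zero]

theorem coeff_pairProd_schurEntry_insert_of_even {t : σ} (ht : ∀ j ∈ s, j < t) (hs : Even #s)
    (hν : StrictAntiOn ν (insert t s : Finset σ)) :
    coeff ν (pairProd schurEntry (insert t s) : MvPowerSeries σ R) =
      if ν t = 0 then coeff ν (pairProd schurEntry s) else 0 := by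
  have hts : t ∉ s := fun h => (ht t h).false
  rw [pairProd_schurEntry_eq_sum_of_odd (card_insert_of_notMem hts ▸ hs.add_one), map_sum,
    sum_eq_single_of_mem t (mem_insert_self t s)]
  · rw [coeff_neg_one_pow_mul, erase_insert hts, filter_insert, if_neg (lt_irrefl t),
      filter_true_of_mem ht, hs.neg_one_pow, one_mul]
    split_ifs with h0
    · rfl
    · exact coeff_eq_zero_of_mem_independentOf (pairProd_schurEntry_mem_independentOf hts) h0
  · intro b hb hbt
    have hνb : ν t < ν b :=
      hν (mem_insert_of_mem ((mem_insert.1 hb).resolve_left hbt)) (mem_insert_self t s)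
        (ht b ((mem_insert.1 hb).resolve_left hbt))
    rw [coeff_neg_one_pow_mul, coeff_eq_zero_of_mem_independentOf
      (pairProd_schurEntry_mem_independentOf (notMem_erase b _)) (by omega), mul_zero]

open scoped Classical in
theorem coeff_pairProd_schurEntry_of_even (hs : Even #s) (hν : StrictAntiOn ν s)
    (hsupp : ∀ i ∉ s, ν i = 0) :
    coeff ν (pairProd schurEntry s : MvPowerSeries σ R) = if HasEvenColumns ν s then 1 else 0 := by
  obtain ⟨k, hk⟩ := hs.two_dvd
  induction k generalizing s ν with
  | zero =>
    obtain rfl : s = ∅ := card_eq_zero.1 hk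
    obtain rfl : ν = 0 := Finsupp.ext fun i => hsupp i (notMem_empty i)
    rw [pairProd_empty, coeff_zero_one, if_pos]
    exact fun c _ => Even.zero
  | succ k ih =>
    obtain ⟨t, u, ht, rfl⟩ := exists_eq_insert_forall_lt (s := s) (card_pos.1 (by omega))
    rw [card_insert_of_notMem fun h => (ht t h).false] at hk
    obtain ⟨a, s, ha, rfl⟩ := exists_eq_insert_forall_lt (s := u) (card_pos.1 (by omega))
    have has : a ∉ s := fun h => (ha a h).false
    have hts : t ∉ s := fun h => (ht t (mem_insert_of_mem h)).false
    rw [card_insert_of_notMem has] at hk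
    have hta := ht a (mem_insert_self a s)
    have hrest : ∀ i ∈ s, ν i = (ν.erase t).erase a i := fun i hi => by
      rw [Finsupp.erase_ne (ne_of_mem_of_not_mem hi has),
        Finsupp.erase_ne (ne_of_mem_of_not_mem hi hts)]
    have hs : Even #s := ⟨k, by omega⟩
    rw [coeff_pairProd_schurEntry_insert_insert hta ha hs hν,
      hasEvenColumns_insert_insert_iff hta ha hν, hasEvenColumns_congr hrest, ih hs]
    · by_cases h : ν t = ν a + 1 <;> simp [h]
    · refine (hν.mono fun i hi => ?_).congr hrest
      exact mem_insert_of_mem (mem_insert_of_mem hi)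
    · intro i hi
      rcases eq_or_ne i a with rfl | hia
      · simp
      rcases eq_or_ne i t with rfl | hit
      · simp [hia]
      · simpa [hia, hit] using hsupp i (by simp [hia, hit, hi])
    · omega

open scoped Classical in
theorem coeff_pairProd_schurEntry (hν : StrictAntiOn ν s) (hsupp : ∀ i ∉ s, ν i = 0) :
    coeff ν (pairProd schurEntry s : MvPowerSeries σ R) = if HasEvenColumns ν s then 1 else 0 := by
  rcases Nat.even_or_odd #s with hs | hs
  · exact coeff_pairProd_schurEntry_of_even hs hν hsupp
  obtain ⟨t, u, ht, rfl⟩ := exists_eq_insert_forall_gt (card_pos.1 hs.pos)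
  have hu : Even #u := by
    rwa [card_insert_of_notMem fun h => (ht t h).false, Nat.odd_add_one, Nat.not_odd_iff_even] at hs
  rw [coeff_pairProd_schurEntry_insert_of_even ht hu hν, hasEvenColumns_insert_iff_of_even ht hu hν]
  by_cases h0 : ν t = 0
  · have hsupp' : ∀ i ∉ u, ν i = 0 := fun i hi => by
      rcases eq_or_ne i t with rfl | hit
      · exact h0
      · exact hsupp i (by simp [hit, hi])
    simp [h0, coeff_pairProd_schurEntry_of_even hu (hν.mono (by simp)) hsupp']
  · simp [h0]

end Coefficients

section Alternating

open MvPowerSeries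

variable {σ R : Type*} [Fintype σ] [DecidableEq σ] [CommRing R] {f : MvPowerSeries σ R}

/-- Permuting the variables multiplies `f` by the sign of the permutation. -/
def IsAlternating (f : MvPowerSeries σ R) : Prop :=
  ∀ e : Equiv.Perm σ, rename e f = (Equiv.Perm.sign e : ℤ) • f

theorem IsAlternating.coeff_equivMapDomain (hf : IsAlternating f) (e : Equiv.Perm σ)
    (ν : σ →₀ ℕ) : coeff ν f = (Equiv.Perm.sign e : ℤ) • coeff (ν.equivMapDomain e) f := by
  rw [← coeff_embDomain_rename e.toEmbedding f ν, Finsupp.embDomain_eq_mapDomain,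
    Finsupp.equivMapDomain_eq_mapDomain]
  exact (congrArg _ (hf e)).trans (map_zsmul _ _ _)

theorem IsAlternating.coeff_eq_zero [NoZeroDivisors R] [NeZero (2 : R)] (hf : IsAlternating f)
    {ν : σ →₀ ℕ} {a b : σ} (hab : a ≠ b) (h : ν a = ν b) : coeff ν f = 0 := by
  have hswap : ν.equivMapDomain (Equiv.swap a b) = ν :=
    Finsupp.ext fun i => Equiv.apply_swap_eq_self h i
  have hneg := hf.coeff_equivMapDomain (Equiv.swap a b) ν
  rw [hswap, Equiv.Perm.sign_swap hab, Units.val_neg, Units.val_one, neg_one_zsmul] at hneg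
  refine (mul_eq_zero.1 ?_).resolve_left (two_ne_zero (α := R))
  linear_combination hneg

theorem isAlternating_det (m : σ → ℕ) :
    IsAlternating (Matrix.of fun i j : σ => (X i : MvPowerSeries σ R) ^ m j).det := by
  intro e
  rw [zsmul_eq_mul, ← Matrix.det_permute, AlgHom.map_det]
  congr 1
  ext1 i j
  simp

variable {n : ℕ}

theorem isAlternating_pairProd_schurEntry :
    IsAlternating (pairProd schurEntry univ : MvPowerSeries (Fin n) R) := by
  intro e
  rw [pairProd_univ, zsmul_eq_mul, ← e.prod_Ioi_comp_eq_sign_mul_prod schurEntry_antisymm]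
  simp only [map_prod]
  exact prod_congr rfl fun i _ => prod_congr rfl fun j _ =>
    map_schurEntry (rename e : MvPowerSeries (Fin n) R →ₐ[R] _).toRingHom (rename_X e i)
      (rename_X e j)

theorem eq_one_of_strictAnti_comp {m ν : Fin n → ℕ} (hm : StrictAnti m) (hν : StrictAnti ν)
    {e : Equiv.Perm (Fin n)} (h : ∀ i, ν (e i) = m i) : e = 1 := by
  have he : StrictMono e := fun i j hij => hν.lt_iff_gt.1 (by rw [h, h]; exact hm hij)
  exact Equiv.ext fun i => congrFun
    ((he.range_inj strictMono_id).1 (by simp [e.surjective.range_eq])) i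

theorem coeff_det_of_strictAnti {m : Fin n → ℕ} (hm : StrictAnti m) {ν : Fin n →₀ ℕ}
    (hν : StrictAnti ν) :
    coeff ν (Matrix.of fun i j : Fin n => (X i : MvPowerSeries (Fin n) R) ^ m j).det =
      if ⇑ν = m then 1 else 0 := by
  have hmon (e : Equiv.Perm (Fin n)) : ∏ i, (X (e i) : MvPowerSeries (Fin n) R) ^ m i =
      monomial (∑ i, Finsupp.single (e i) (m i)) 1 := by
    simp only [X_pow_eq, prod_monomial, prod_const_one]
  have hval (e : Equiv.Perm (Fin n)) (i : Fin n) :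
      (∑ i, Finsupp.single (e i) (m i)) (e i) = m i := by
    simp [Finsupp.finsetSum_apply, Finsupp.single_apply]
  simp only [Matrix.det_apply, Matrix.of_apply, hmon, map_sum]
  rw [sum_eq_single_of_mem 1 (mem_univ 1)]
  · rw [Equiv.Perm.sign_one, one_smul, coeff_monomial]
    refine if_congr ⟨?_, fun h => Finsupp.ext fun i => ?_⟩ rfl rfl
    · rintro rfl
      exact funext (hval 1)
    · rw [h]
      exact (hval 1 i).symm
  · intro e _ he
    have hne : ν ≠ ∑ i, Finsupp.single (e i) (m i) := fun h =>
      he (eq_one_of_strictAnti_comp hm hν fun i => by rw [h, hval])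
    rw [Units.smul_def, map_zsmul, coeff_monomial_ne hne, smul_zero]

open scoped MvPowerSeries.WithPiTopology in
theorem hasSum_of_isAlternating {α : Type*} [NoZeroDivisors R] [NeZero (2 : R)]
    [TopologicalSpace R] [IsTopologicalAddGroup R] {F : α → MvPowerSeries (Fin n) R}
    {G : MvPowerSeries (Fin n) R} (hF : ∀ a, IsAlternating (F a)) (hG : IsAlternating G)
    (h : ∀ ν : Fin n →₀ ℕ, StrictAnti ν → HasSum (fun a => coeff ν (F a)) (coeff ν G)) :
    HasSum F G := by
  refine WithPiTopology.hasSum_iff_hasSum_coeff.2 fun ν => ?_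
  by_cases hν : Function.Injective ν
  · let e := Tuple.sort (OrderDual.toDual ∘ ν)
    have he : StrictAnti (ν.equivMapDomain e.symm) :=
      (Tuple.monotone_sort (OrderDual.toDual ∘ ν)).dual_right.strictAnti_of_injective
        (hν.comp e.injective)
    simp only [fun a => (hF a).coeff_equivMapDomain e.symm ν, hG.coeff_equivMapDomain e.symm ν]
    exact (h _ he).const_smul _
  · obtain ⟨a, b, hab, hne⟩ := Function.not_injective_iff.1 hν
    simp only [fun i => (hF i).coeff_eq_zero hne hab, hG.coeff_eq_zero hne hab]
    exact hasSum_zero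

end Alternating

section Littlewood

open MvPowerSeries

variable {n : ℕ}

/-- The partitions with at most `n` parts whose conjugate has only even parts; the `c`-th part of
the conjugate of `l` is `#{i | c ≤ l i}`. -/
abbrev EvenConjugatePartition (n : ℕ) : Type :=
  {l : Fin n → ℕ // (∀ i j : Fin n, i ≤ j → l j ≤ l i) ∧
    ∀ c : ℕ, 1 ≤ c → Even (univ.filter (fun i : Fin n => c ≤ l i)).card}

theorem strictAnti_add_sub {l : Fin n → ℕ} (hl : Antitone l) :
    StrictAnti fun i : Fin n => l i + (n - 1 - (i : ℕ)) := fun i j hij => by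
  have := hl hij.le
  dsimp only
  omega

theorem exists_antitone_eq_add_sub {ν : Fin n → ℕ} (hν : StrictAnti ν) :
    ∃ l : Fin n → ℕ, Antitone l ∧ ν = fun i => l i + (n - 1 - (i : ℕ)) := by
  refine ⟨fun i => ν i - (n - 1 - (i : ℕ)), fun i j hij => ?_, funext fun i => ?_⟩
  · have hgap : ν j + #(Ioc i j) ≤ ν i :=
      add_card_le_of_strictAntiOn (hν.strictAntiOn _) (mem_univ i) (subset_univ _)
        (fun k hk => (mem_Ioc.1 hk).1) (hν.antitone hij)
        fun k hk => hν.antitone (mem_Ioc.1 hk).2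
    rw [Fin.card_Ioc] at hgap
    dsimp only
    omega
  · have hgap : 0 + #(Ioi i) ≤ ν i :=
      add_card_le_of_strictAntiOn (hν.strictAntiOn _) (mem_univ i) (subset_univ _)
        (fun k hk => mem_Ioi.1 hk) (Nat.zero_le _) fun _ _ => Nat.zero_le _
    rw [Fin.card_Ioi] at hgap
    dsimp only
    omega

theorem hasEvenColumns_add_sub_iff (l : Fin n → ℕ) :
    HasEvenColumns (fun i => l i + (n - 1 - (i : ℕ))) univ ↔
      ∀ c, 1 ≤ c → Even #{i | c ≤ l i} := by
  simp only [HasEvenColumns, columnHeight, filter_lt_eq_Ioi, Fin.card_Ioi, add_le_add_iff_right]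

open scoped Classical in
theorem hasSum_ite_eq_add_sub {R : Type*} [AddCommMonoid R] [One R] [TopologicalSpace R]
    {ν : Fin n → ℕ} (hν : StrictAnti ν) :
    HasSum (fun l : EvenConjugatePartition n =>
        if ν = fun j => l.1 j + (n - 1 - (j : ℕ)) then (1 : R) else 0)
      (if HasEvenColumns ν univ then 1 else 0) := by
  obtain ⟨l, hl, rfl⟩ := exists_antitone_eq_add_sub hν
  have hinj (l' : Fin n → ℕ) : ((fun j => l j + (n - 1 - (j : ℕ))) =
      fun j => l' j + (n - 1 - (j : ℕ))) ↔ l' = l := by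
    simp only [funext_iff, Nat.add_right_cancel_iff, eq_comm]
  simp only [hinj, hasEvenColumns_add_sub_iff]
  split_ifs with heven
  · simpa only [Subtype.ext_iff] using
      hasSum_ite_eq (⟨l, fun _ _ h => hl h, heven⟩ : EvenConjugatePartition n) (1 : R)
  · have hne (l' : EvenConjugatePartition n) : l'.1 ≠ l := fun h => heven (h ▸ l'.2.2)
    simpa only [if_neg (hne _)] using hasSum_zero

open scoped MvPowerSeries.WithPiTopology

theorem hasSum_det_pairProd_schurEntry {R : Type*} [CommRing R] [IsDomain R] [NeZero (2 : R)]
    [TopologicalSpace R] [IsTopologicalAddGroup R] :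
    HasSum (fun l : EvenConjugatePartition n => (Matrix.of fun i j : Fin n =>
        (X i : MvPowerSeries (Fin n) R) ^ (l.1 j + (n - 1 - (j : ℕ)))).det)
      (pairProd schurEntry univ) := by
  classical
  refine hasSum_of_isAlternating (fun l => isAlternating_det _)
    isAlternating_pairProd_schurEntry fun ν hν => ?_
  simp only [fun l : EvenConjugatePartition n =>
    coeff_det_of_strictAnti (R := R) (strictAnti_add_sub fun _ _ => l.2.1 _ _) hν]
  rw [coeff_pairProd_schurEntry (hν.strictAntiOn _) fun i hi => (hi (mem_univ i)).elim]
  exact hasSum_ite_eq_add_sub hν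

theorem continuous_map_of_discreteTopology {σ R S : Type*} [CommRing R] [TopologicalSpace R]
    [DiscreteTopology R] [CommRing S] [TopologicalSpace S] (φ : R →+* S) :
    Continuous (MvPowerSeries.map (σ := σ) φ) :=
  continuous_pi fun ν => continuous_of_discreteTopology.comp (WithPiTopology.continuous_coeff R ν)

theorem littlewood_sum_conjugate_even_partitions_general (n : ℕ) (R : Type*) [CommRing R]
    [TopologicalSpace R] :
    HasSum (fun l : EvenConjugatePartition n => (Matrix.of fun i j : Fin n =>
        (X i : MvPowerSeries (Fin n) R) ^ (l.1 j + (n - 1 - (j : ℕ)))).det *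
          ∏ i : Fin n, ∏ j ∈ Ioi i, (1 - X i * X j))
      (∏ i : Fin n, ∏ j ∈ Ioi i, (X i - X j)) := by
  have hint := (hasSum_det_pairProd_schurEntry (n := n) (R := ℤ)).mul_right
    (∏ i, ∏ j ∈ Ioi i, (1 - X i * X j))
  rw [pairProd_schurEntry_mul_prod_one_sub] at hint
  have hR := hint.map (MvPowerSeries.map (Int.castRingHom R))
    (continuous_map_of_discreteTopology _)
  simpa [Function.comp_def, RingHom.map_det, RingHom.mapMatrix_apply, Matrix.map] using hR

end Littlewood

/-- **Littlewood's formula** `∑_{λ' even} s_λ = ∏_{i<j} 1/(1-x_i x_j)` with denominators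
cleared, as a convergent sum in `ℚ[[x_1,…,x_n]]` (with the product topology coming from
the discrete topology on the coefficients).  Partitions with at most `n` parts whose
conjugate is even (i.e. `#{i : λ_i ≥ c}` is even for every `c ≥ 1`) are encoded as
antitone functions `Fin n → ℕ` with the corresponding parity condition; with 0-indexed
`j`, the exponent `λ_j + n - j` becomes `l j + (n - 1 - j)`. -/
theorem littlewood_sum_conjugate_even_partitions (n : ℕ) (hn : 0 < n) :
    letI : TopologicalSpace ℚ := ⊥
    letI : TopologicalSpace (MvPowerSeries (Fin n) ℚ) :=
      inferInstanceAs (TopologicalSpace ((Fin n →₀ ℕ) → ℚ))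
    HasSum
      (fun l : {l : Fin n → ℕ //
          (∀ i j : Fin n, i ≤ j → l j ≤ l i) ∧
            ∀ c : ℕ, 1 ≤ c →
              Even (Finset.univ.filter (fun i : Fin n => c ≤ l i)).card} =>
        Matrix.det (Matrix.of fun i j : Fin n =>
            (MvPowerSeries.X i : MvPowerSeries (Fin n) ℚ) ^ (l.1 j + (n - 1 - (j : ℕ)))) *
          ∏ i : Fin n, ∏ j ∈ Finset.Ioi i,
            (1 - MvPowerSeries.X i * MvPowerSeries.X j))
      (∏ i : Fin n, ∏ j ∈ Finset.Ioi i,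
        (MvPowerSeries.X i - MvPowerSeries.X j)) := by
  exact @littlewood_sum_conjugate_even_partitions_general n ℚ _ ⊥
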